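/- Let ρ and σ be positive definite d×d density matrices, and let (α,z) satisfy either α, z ∈ (0,1), or α ∈ (1,∞) and z ∈ (0,∞). Then the maximum of the sandwiched α-z-Rényi relative entropy S_{α,z}(ρ‖UσU*) over all d×d unitary matrices U equals S_α^C(λ↓(ρ)‖λ↑(σ)). -/

import Mathlib

open Matrix
open scoped ComplexOrder

/-- Real power of a (Hermitian) matrix via functional calculus on eigenvalues,
with `(0:ℝ) ^ t = 0` for `t ≠ 0`. Returns `0` on non-Hermitian input. -/
noncomputable def mpow {d : ℕ} (A : Matrix (Fin d) (Fin d) ℂ) (t : ℝ) :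
    Matrix (Fin d) (Fin d) ℂ :=
  if hA : A.IsHermitian then
    (hA.eigenvectorUnitary : Matrix (Fin d) (Fin d) ℂ) *
      Matrix.diagonal (fun i => ((hA.eigenvalues i ^ t : ℝ) : ℂ)) *
      (star (hA.eigenvectorUnitary : Matrix (Fin d) (Fin d) ℂ))
  else 0

/-- The quantum α-z-fidelity
`F_{α,z}(ρ,σ) = (Tr[(σ^{(1-α)/(2z)} ρ^{α/z} σ^{(1-α)/(2z)})^z])^{1/α}`. -/
noncomputable def Faz {d : ℕ} (ρ σ : Matrix (Fin d) (Fin d) ℂ) (α z : ℝ) : ℝ :=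
  ((mpow (mpow σ ((1 - α) / (2 * z)) * mpow ρ (α / z) * mpow σ ((1 - α) / (2 * z))) z).trace.re)
    ^ (1 / α)

/-- The classical α-fidelity `F_α^C(p,q) = (Σ_i p_i^α q_i^{1-α})^{1/α}`. -/
noncomputable def FazC {d : ℕ} (p q : Fin d → ℝ) (α : ℝ) : ℝ :=
  (∑ i, p i ^ α * q i ^ (1 - α)) ^ (1 / α)

/-- The vector `p` rearranged in increasing order. -/
noncomputable def sortUp {d : ℕ} (p : Fin d → ℝ) : Fin d → ℝ :=
  p ∘ Tuple.sort p

/-- The vector `p` rearranged in decreasing order. -/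
noncomputable def sortDown {d : ℕ} (p : Fin d → ℝ) : Fin d → ℝ :=
  fun i => sortUp p i.rev

/-- `λ↑(A)`: the eigenvalues of a Hermitian matrix in increasing order. -/
noncomputable def eigUp {d : ℕ} {A : Matrix (Fin d) (Fin d) ℂ} (hA : A.IsHermitian) :
    Fin d → ℝ := sortUp hA.eigenvalues

/-- `λ↓(A)`: the eigenvalues of a Hermitian matrix in decreasing order. -/
noncomputable def eigDown {d : ℕ} {A : Matrix (Fin d) (Fin d) ℂ} (hA : A.IsHermitian) :
    Fin d → ℝ := sortDown hA.eigenvalues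

/-- The sandwiched α-z-Rényi relative entropy `S_{α,z}(ρ‖σ) = (α/(α−1)) log F_{α,z}(ρ,σ)`. -/
noncomputable def Saz {d : ℕ} (ρ σ : Matrix (Fin d) (Fin d) ℂ) (α z : ℝ) : ℝ :=
  (α / (α - 1)) * Real.log (Faz ρ σ α z)

/-- The classical α-Rényi relative entropy `S_α^C(p‖q) = (α/(α−1)) log F_α^C(p,q)`. -/
noncomputable def SazC {d : ℕ} (p q : Fin d → ℝ) (α : ℝ) : ℝ :=
  (α / (α - 1)) * Real.log (FazC p q α)


section helpers

variable {d : ℕ}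

lemma aux_contOn (A : Matrix (Fin d) (Fin d) ℂ) (f : ℝ → ℝ) : ContinuousOn f (spectrum ℝ A) :=
  (Matrix.finite_real_spectrum (A := A)).continuousOn f

lemma aux_cfc {A : Matrix (Fin d) (Fin d) ℂ} (hA : A.IsHermitian) (f : ℝ → ℝ) :
    cfc f A = (hA.eigenvectorUnitary : Matrix (Fin d) (Fin d) ℂ) *
      Matrix.diagonal (fun i => ((f (hA.eigenvalues i) : ℝ) : ℂ)) *
      (star (hA.eigenvectorUnitary : Matrix (Fin d) (Fin d) ℂ)) := by
  rw [hA.cfc_eq, Matrix.IsHermitian.cfc, Unitary.conjStarAlgAut_apply]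
  rfl

lemma mpow_eq_cfc {A : Matrix (Fin d) (Fin d) ℂ} (hA : A.IsHermitian) (t : ℝ) :
    mpow A t = cfc (fun x : ℝ => x ^ t) A := by
  rw [aux_cfc hA, mpow, dif_pos hA]

/-- overlap weights -/
noncomputable def ovl (Q : Matrix (Fin d) (Fin d) ℂ) : Matrix (Fin d) (Fin d) ℝ :=
  fun i j => ‖Q i j‖ ^ 2

lemma ovl_ds {Q : Matrix (Fin d) (Fin d) ℂ} (hQ : Q ∈ Matrix.unitaryGroup (Fin d) ℂ) :
    ovl Q ∈ doublyStochastic ℝ (Fin d) := by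
  rw [mem_doublyStochastic_iff_sum]
  refine ⟨fun i j => by unfold ovl; positivity, fun i => ?_, fun j => ?_⟩
  · have h := congrFun (congrFun (Matrix.mem_unitaryGroup_iff.1 hQ) i) i
    simp only [Matrix.mul_apply, Matrix.star_apply, Matrix.one_apply_eq, RCLike.star_def,
      Complex.mul_conj, Complex.normSq_eq_norm_sq] at h
    unfold ovl
    exact_mod_cast h
  · have h := congrFun (congrFun (Matrix.mem_unitaryGroup_iff'.1 hQ) j) j
    simp only [Matrix.mul_apply, Matrix.star_apply, Matrix.one_apply_eq, RCLike.star_def,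
      Complex.conj_mul', ] at h
    unfold ovl
    exact_mod_cast h

lemma trace_diag_conj (Q : Matrix (Fin d) (Fin d) ℂ) (a b : Fin d → ℝ) :
    (Matrix.diagonal (fun i => (a i : ℂ)) * Q * Matrix.diagonal (fun i => (b i : ℂ)) * star Q).trace
      = ((∑ i, ∑ j, ovl Q i j * (a i * b j) : ℝ) : ℂ) := by
  simp only [Matrix.trace, Matrix.diag_apply, Matrix.mul_apply (N := star Q), Matrix.mul_diagonal,
    Matrix.diagonal_mul, Matrix.star_apply, RCLike.star_def, ovl]
  push_cast
  refine Finset.sum_congr rfl fun i _ => Finset.sum_congr rfl fun j _ => ?_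
  rw [← Complex.mul_conj']
  ring

lemma trace_cfc_mul {A B : Matrix (Fin d) (Fin d) ℂ} (hA : A.IsHermitian) (hB : B.IsHermitian)
    (W : Matrix (Fin d) (Fin d) ℂ) (f g : ℝ → ℝ) :
    (cfc f A * (W * cfc g B * star W)).trace.re =
      ∑ i, ∑ j, ovl (star (hA.eigenvectorUnitary : Matrix (Fin d) (Fin d) ℂ) * W *
        (hB.eigenvectorUnitary : Matrix (Fin d) (Fin d) ℂ)) i j *
        (f (hA.eigenvalues i) * g (hB.eigenvalues j)) := by
  have h := trace_diag_conj (star (hA.eigenvectorUnitary : Matrix (Fin d) (Fin d) ℂ) * W *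
        (hB.eigenvectorUnitary : Matrix (Fin d) (Fin d) ℂ)) (fun i => f (hA.eigenvalues i))
        (fun i => g (hB.eigenvalues i))
  have h2 := congrArg Complex.re h
  rw [Complex.ofReal_re] at h2
  rw [← h2, aux_cfc hA, aux_cfc hB]
  generalize (hA.eigenvectorUnitary : Matrix (Fin d) (Fin d) ℂ) = V
  generalize (hB.eigenvectorUnitary : Matrix (Fin d) (Fin d) ℂ) = V'
  congr 1
  simp only [star_mul, star_star, mul_assoc]
  rw [Matrix.trace_mul_comm]
  simp only [mul_assoc]

lemma trace_cfc {A : Matrix (Fin d) (Fin d) ℂ} (hA : A.IsHermitian) (f : ℝ → ℝ) :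
    (cfc f A).trace.re = ∑ i, f (hA.eigenvalues i) := by
  rw [aux_cfc hA, Matrix.trace_mul_comm, ← mul_assoc]
  simp [Matrix.trace]

lemma klein {C D : Matrix (Fin d) (Fin d) ℂ} (hC : C.IsHermitian) (hD : D.IsHermitian)
    (f g : ℝ → ℝ) (K : ℝ)
    (h : ∀ i j, |f (hD.eigenvalues j) - f (hC.eigenvalues i)
      - g (hC.eigenvalues i) * (hD.eigenvalues j - hC.eigenvalues i)|
        ≤ K * (hD.eigenvalues j - hC.eigenvalues i) ^ 2) :
    |(cfc f D).trace.re - (cfc f C).trace.re - (cfc g C * (D - C)).trace.re|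
      ≤ K * ((D - C) * (D - C)).trace.re := by
  have hC' : IsSelfAdjoint C := hC
  have hD' : IsSelfAdjoint D := hD
  have key := fun f g => trace_cfc_mul hC hD 1 f g
  simp only [one_mul, star_one, mul_one] at key
  set w := ovl (star (hC.eigenvectorUnitary : Matrix (Fin d) (Fin d) ℂ) *
        (hD.eigenvectorUnitary : Matrix (Fin d) (Fin d) ℂ)) with hw
  have e1 : (cfc f D).trace.re = ∑ i, ∑ j, w i j * (1 * f (hD.eigenvalues j)) := by
    rw [← key (fun _ => 1) f, cfc_const_one ℝ C, one_mul]
  have e2 : (cfc f C).trace.re = ∑ i, ∑ j, w i j * (f (hC.eigenvalues i) * 1) := by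
    rw [← key f (fun _ => 1), cfc_const_one ℝ D, mul_one]
  have e3 : (cfc g C * D).trace.re =
      ∑ i, ∑ j, w i j * (g (hC.eigenvalues i) * hD.eigenvalues j) := by
    rw [← key g (fun x => x), cfc_id' ℝ D]
  have e4 : (cfc g C * C).trace.re =
      ∑ i, ∑ j, w i j * (g (hC.eigenvalues i) * hC.eigenvalues i * 1) := by
    rw [← key (fun x => g x * x) (fun _ => 1), cfc_const_one ℝ D, mul_one,
      cfc_mul g (fun x => x) C (aux_contOn _ _) (aux_contOn _ _), cfc_id' ℝ C]
  have e5 : (D * D).trace.re =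
      ∑ i, ∑ j, w i j * (1 * (hD.eigenvalues j * hD.eigenvalues j)) := by
    rw [← key (fun _ => 1) (fun x => x * x), cfc_const_one ℝ C, one_mul,
      cfc_mul (fun x => x) (fun x => x) D (aux_contOn _ _) (aux_contOn _ _), cfc_id' ℝ D]
  have e6 : (C * C).trace.re =
      ∑ i, ∑ j, w i j * ((hC.eigenvalues i * hC.eigenvalues i) * 1) := by
    rw [← key (fun x => x * x) (fun _ => 1), cfc_const_one ℝ D, mul_one,
      cfc_mul (fun x => x) (fun x => x) C (aux_contOn _ _) (aux_contOn _ _), cfc_id' ℝ C]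
  have e7 : (C * D).trace.re =
      ∑ i, ∑ j, w i j * (hC.eigenvalues i * hD.eigenvalues j) := by
    rw [← key (fun x => x) (fun x => x), cfc_id' ℝ D, cfc_id' ℝ C]
  have e8 : (D * C).trace.re = (C * D).trace.re := by rw [Matrix.trace_mul_comm]
  have E1 : (cfc f D).trace.re - (cfc f C).trace.re - (cfc g C * (D - C)).trace.re =
      ∑ i, ∑ j, w i j * (f (hD.eigenvalues j) - f (hC.eigenvalues i)
      - g (hC.eigenvalues i) * (hD.eigenvalues j - hC.eigenvalues i)) := by
    rw [mul_sub, Matrix.trace_sub, Complex.sub_re, e1, e2, e3, e4]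
    simp only [← Finset.sum_sub_distrib]
    exact Finset.sum_congr rfl fun i _ => Finset.sum_congr rfl fun j _ => by ring
  have E2 : K * ((D - C) * (D - C)).trace.re =
      ∑ i, ∑ j, w i j * (K * (hD.eigenvalues j - hC.eigenvalues i) ^ 2) := by
    rw [mul_sub, sub_mul, sub_mul, Matrix.trace_sub, Matrix.trace_sub, Matrix.trace_sub]
    simp only [Complex.sub_re]
    rw [e5, e8, e7, e6]
    simp only [← Finset.sum_sub_distrib, Finset.mul_sum]
    exact Finset.sum_congr rfl fun i _ => Finset.sum_congr rfl fun j _ => by ring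
  rw [E1, E2]
  refine (Finset.abs_sum_le_sum_abs _ _).trans (Finset.sum_le_sum fun i _ => ?_)
  refine (Finset.abs_sum_le_sum_abs _ _).trans (Finset.sum_le_sum fun j _ => ?_)
  have hw0 : 0 ≤ w i j := by rw [hw]; unfold ovl; positivity
  rw [abs_mul, abs_of_nonneg hw0]
  exact mul_le_mul_of_nonneg_left (h i j) hw0

lemma mpow_conj {A : Matrix (Fin d) (Fin d) ℂ} (hA : A.IsHermitian)
    {U : Matrix (Fin d) (Fin d) ℂ} (hU : U ∈ Matrix.unitaryGroup (Fin d) ℂ) (t : ℝ) :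
    mpow (U * A * star U) t = U * mpow A t * star U := by
  have hA' : IsSelfAdjoint A := hA
  have hB : (U * A * star U).IsHermitian := Matrix.isHermitian_mul_mul_conjTranspose U hA
  rw [mpow_eq_cfc hA, mpow_eq_cfc hB]
  have := StarAlgHomClass.map_cfc (S := ℝ) (Unitary.conjStarAlgAut ℝ (Matrix (Fin d) (Fin d) ℂ) ⟨U, hU⟩)
    (fun x : ℝ => x ^ t) A (aux_contOn _ _)
    (by
      have : (⇑(Unitary.conjStarAlgAut ℝ (Matrix (Fin d) (Fin d) ℂ) ⟨U, hU⟩)) =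
        fun x => U * x * star U := by ext1 x; simp [Unitary.conjStarAlgAut_apply]
      rw [this]; fun_prop) hA' (by
        rw [Unitary.conjStarAlgAut_apply]; exact hB)
  simpa [Unitary.conjStarAlgAut_apply] using this.symm

lemma mpow_posDef {A : Matrix (Fin d) (Fin d) ℂ} (hA : A.PosDef) (t : ℝ) : (mpow A t).PosDef := by
  rw [mpow, dif_pos hA.1]
  have h1 : (Matrix.diagonal (fun i => ((hA.1.eigenvalues i ^ t : ℝ) : ℂ))).PosDef := by
    apply Matrix.PosDef.diagonal
    intro i
    exact_mod_cast Real.rpow_pos_of_pos (hA.eigenvalues_pos i) t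
  rw [Matrix.star_eq_conjTranspose]
  exact (Matrix.IsUnit.posDef_star_right_conjugate_iff (Unitary.isUnit_coe)).2 h1

lemma spec_pos {A : Matrix (Fin d) (Fin d) ℂ} (hA : A.PosDef) {x : ℝ} (hx : x ∈ spectrum ℝ A) :
    0 < x := by
  rw [hA.1.spectrum_real_eq_range_eigenvalues] at hx
  obtain ⟨i, rfl⟩ := hx
  exact hA.eigenvalues_pos i

lemma mpow_mul {A : Matrix (Fin d) (Fin d) ℂ} (hA : A.PosDef) (s t : ℝ) :
    mpow A s * mpow A t = mpow A (s + t) := by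
  have hA' : IsSelfAdjoint A := hA.1
  rw [mpow_eq_cfc hA.1, mpow_eq_cfc hA.1, mpow_eq_cfc hA.1,
    ← cfc_mul _ _ A (aux_contOn _ _) (aux_contOn _ _)]
  refine cfc_congr fun x hx => ?_
  exact (Real.rpow_add (spec_pos hA hx) s t).symm

lemma mpow_one' {A : Matrix (Fin d) (Fin d) ℂ} (hA : A.IsHermitian) : mpow A 1 = A := by
  have hA' : IsSelfAdjoint A := hA
  rw [mpow_eq_cfc hA]
  simp [cfc_id' ℝ A]

lemma mpow_zero' {A : Matrix (Fin d) (Fin d) ℂ} (hA : A.IsHermitian) : mpow A 0 = 1 := by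
  have hA' : IsSelfAdjoint A := hA
  rw [mpow_eq_cfc hA]
  simp [cfc_const_one ℝ A]

lemma mpow_mpow {A : Matrix (Fin d) (Fin d) ℂ} (hA : A.PosDef) (s t : ℝ) :
    mpow (mpow A s) t = mpow A (s * t) := by
  have hA' : IsSelfAdjoint A := hA.1
  rw [mpow_eq_cfc (mpow_posDef hA s).1, mpow_eq_cfc hA.1, mpow_eq_cfc hA.1,
    ← cfc_comp' (fun x : ℝ => x ^ t) (fun x : ℝ => x ^ s) A
      (((Matrix.finite_real_spectrum (A := A)).image _).continuousOn _) (aux_contOn _ _)]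
  refine cfc_congr fun x hx => ?_
  exact (Real.rpow_mul (spec_pos hA hx).le s t).symm

lemma commute_mpow {A B : Matrix (Fin d) (Fin d) ℂ} (hA : A.IsHermitian) (h : Commute A B) (t : ℝ) :
    Commute (mpow A t) B := by
  rw [mpow_eq_cfc hA]
  exact h.cfc_real _

lemma commute_of_mpow {A B : Matrix (Fin d) (Fin d) ℂ} (hA : A.PosDef) {t : ℝ} (ht : t ≠ 0)
    (h : Commute (mpow A t) B) : Commute A B := by
  have := commute_mpow (mpow_posDef hA t).1 h (1 / t)
  rwa [mpow_mpow hA, mul_one_div_cancel ht, mpow_one' hA.1] at this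



open scoped Matrix.Norms.L2Operator MatrixOrder in
lemma mpow_exp {H : Matrix (Fin d) (Fin d) ℂ} (hH : IsSelfAdjoint H) (t : ℝ) :
    mpow (NormedSpace.exp H) t = NormedSpace.exp (t • H) := by
  have h1 : (NormedSpace.exp H).IsHermitian := Matrix.IsHermitian.exp hH
  have h2 : IsSelfAdjoint (t • H) := IsSelfAdjoint.smul (IsSelfAdjoint.all t) hH
  rw [mpow_eq_cfc h1, ← CFC.real_exp_eq_normedSpace_exp hH, ← CFC.real_exp_eq_normedSpace_exp h2,
    ← cfc_comp' (fun x : ℝ => x ^ t) Real.exp H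
      (((Matrix.finite_real_spectrum (A := H)).image _).continuousOn _) (aux_contOn _ _),
    ← cfc_comp_smul t Real.exp H]
  refine cfc_congr fun x _ => ?_
  simp only [smul_eq_mul]
  rw [← Real.exp_mul, mul_comm]

open scoped Matrix.Norms.L2Operator in
lemma exp_log_pd {A : Matrix (Fin d) (Fin d) ℂ} (hA : A.PosDef) :
    NormedSpace.exp (cfc Real.log A) = A := by
  have hA' : IsSelfAdjoint A := hA.1
  have h1 : IsSelfAdjoint (cfc Real.log A) := cfc_predicate _ _
  rw [← CFC.real_exp_eq_normedSpace_exp h1, ← cfc_comp' Real.exp Real.log A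
      (((Matrix.finite_real_spectrum (A := A)).image _).continuousOn _) (aux_contOn _ _)]
  conv_rhs => rw [← cfc_id' ℝ A]
  refine cfc_congr fun x hx => ?_
  exact Real.exp_log (spec_pos hA hx)

lemma mpow_mul_of_commute {A B : Matrix (Fin d) (Fin d) ℂ} (hA : A.PosDef) (hB : B.PosDef)
    (h : Commute A B) (z : ℝ) : mpow (A * B) z = mpow A z * mpow B z := by
  have h1 : IsSelfAdjoint (cfc Real.log A) := cfc_predicate _ _
  have h2 : IsSelfAdjoint (cfc Real.log B) := cfc_predicate _ _
  have hc : Commute (cfc Real.log A) (cfc Real.log B) :=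
    ((h.cfc_real _).symm.cfc_real _).symm
  have e : A * B = NormedSpace.exp (cfc Real.log A + cfc Real.log B) := by
    rw [Matrix.exp_add_of_commute _ _ hc, exp_log_pd hA, exp_log_pd hB]
  rw [e, mpow_exp (h1.add h2), smul_add, Matrix.exp_add_of_commute _ _
    ((hc.smul_left z).smul_right z), ← mpow_exp h1, ← mpow_exp h2, exp_log_pd hA, exp_log_pd hB]

lemma scalar_taylor {m M : ℝ} (hm : 0 < m) (z : ℝ) :
    ∃ K : ℝ, 0 ≤ K ∧ ∀ x ∈ Set.Icc m M, ∀ y ∈ Set.Icc m M,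
      |y ^ z - x ^ z - z * x ^ (z - 1) * (y - x)| ≤ K * (y - x) ^ 2 := by
  have hd : ∀ (r : ℝ), ∀ u ∈ Set.Icc m M, HasDerivAt (fun u : ℝ => u ^ r) (r * u ^ (r - 1)) u :=
    fun r u hu => Real.hasDerivAt_rpow_const (Or.inl (hm.trans_le hu.1).ne')
  have hcont : ContinuousOn (fun u : ℝ => z * ((z - 1) * u ^ (z - 1 - 1))) (Set.Icc m M) :=
    fun u hu => (((hd _ u hu).continuousAt.const_mul _).const_mul _).continuousWithinAt
  obtain ⟨L, hL⟩ := isCompact_Icc.exists_bound_of_continuousOn hcont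
  refine ⟨max L 0, le_max_right _ _, fun x hx y hy => ?_⟩
  have h1 : ∀ u ∈ Set.Icc m M, |z * u ^ (z - 1) - z * x ^ (z - 1)| ≤ max L 0 * |u - x| := by
    intro u hu
    exact (convex_Icc m M).norm_image_sub_le_of_norm_hasDerivWithin_le
      (f := fun u : ℝ => z * u ^ (z - 1))
      (fun v hv => ((hd (z - 1) v hv).const_mul z).hasDerivWithinAt)
      (fun v hv => (hL v hv).trans (le_max_left _ _)) hx hu
  have hsub : Set.uIcc x y ⊆ Set.Icc m M := Set.uIcc_subset_Icc hx hy
  have h2 := (convex_uIcc x y).norm_image_sub_le_of_norm_hasDerivWithin_le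
      (f := fun u : ℝ => u ^ z - z * x ^ (z - 1) * u) (C := max L 0 * |y - x|)
      (fun v hv => ((hd z v (hsub hv)).sub ((hasDerivAt_id' v).const_mul
        (z * x ^ (z - 1)))).hasDerivWithinAt)
      (fun v hv => by
        rw [mul_one, Real.norm_eq_abs]
        refine (h1 v (hsub hv)).trans ?_
        refine mul_le_mul_of_nonneg_left ?_ (le_max_right _ _)
        exact Set.abs_sub_left_of_mem_uIcc hv)
      Set.left_mem_uIcc Set.right_mem_uIcc
  rw [Real.norm_eq_abs, Real.norm_eq_abs, mul_assoc (max L 0), ← pow_two, sq_abs] at h2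
  convert h2 using 2
  ring

open scoped MatrixOrder in
lemma eig_bounds {S A : Matrix (Fin d) (Fin d) ℂ} (hS : S.PosDef) (hA : A.PosDef) :
    ∃ m M : ℝ, 0 < m ∧ ∀ W ∈ Matrix.unitaryGroup (Fin d) ℂ,
      ∀ hD : (S * (W * A * star W) * S).IsHermitian, ∀ i, hD.eigenvalues i ∈ Set.Icc m M := by
  have hb : ∀ B : Matrix (Fin d) (Fin d) ℂ, B.PosDef → ∃ a b : ℝ, 0 < a ∧ 0 < b ∧
      algebraMap ℝ _ a ≤ B ∧ B ≤ algebraMap ℝ _ b := by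
    intro B hB
    have hB' : IsSelfAdjoint B := hB.1
    rcases isEmpty_or_nonempty (Fin d) with he | he
    · exact ⟨1, 1, one_pos, one_pos, le_of_eq (by ext i; exact he.elim i),
        le_of_eq (by ext i; exact he.elim i)⟩
    obtain ⟨i, hi⟩ := Finite.exists_min hB.1.eigenvalues
    obtain ⟨j, hj⟩ := Finite.exists_max hB.1.eigenvalues
    refine ⟨_, _, hB.eigenvalues_pos i, hB.eigenvalues_pos j, ?_, ?_⟩
    · rw [algebraMap_le_iff_le_spectrum, hB.1.spectrum_real_eq_range_eigenvalues]
      rintro _ ⟨k, rfl⟩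
      exact hi k
    · rw [le_algebraMap_iff_spectrum_le, hB.1.spectrum_real_eq_range_eigenvalues]
      rintro _ ⟨k, rfl⟩
      exact hj k
  have hSs : star S = S := hS.1
  have hSS : (S * S).PosDef := by
    have := mpow_mul hS 1 1
    rw [mpow_one' hS.1] at this
    rw [this]
    exact mpow_posDef hS _
  obtain ⟨a, b, ha, hb0, haA, hAb⟩ := hb A hA
  obtain ⟨s, s', hs, hs0, hsS, hSs'⟩ := hb (S * S) hSS
  have conj : ∀ W ∈ Matrix.unitaryGroup (Fin d) ℂ, ∀ a : ℝ,
      S * (W * (algebraMap ℝ (Matrix (Fin d) (Fin d) ℂ) a) * star W) * S = a • (S * S) := by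
    intro W hW a
    rw [Algebra.algebraMap_eq_smul_one, mul_smul_comm, mul_one, smul_mul_assoc,
      Matrix.mem_unitaryGroup_iff.1 hW, mul_smul_comm, mul_one, smul_mul_assoc]
  refine ⟨a * s, b * s', mul_pos ha hs, fun W hW hD i => ?_⟩
  have hD' : IsSelfAdjoint (S * (W * A * star W) * S) := hD
  have mono : ∀ X Y : Matrix (Fin d) (Fin d) ℂ, X ≤ Y →
      S * (W * X * star W) * S ≤ S * (W * Y * star W) * S := by
    intro X Y h
    have := star_right_conjugate_le_conjugate (star_right_conjugate_le_conjugate h W) S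
    rwa [hSs] at this
  have l1 : algebraMap ℝ _ (a * s) ≤ S * (W * A * star W) * S := by
    refine le_trans ?_ (mono _ _ haA)
    rw [conj W hW, map_mul, ← Algebra.smul_def]
    exact smul_le_smul_of_nonneg_left hsS ha.le
  have l2 : S * (W * A * star W) * S ≤ algebraMap ℝ _ (b * s') := by
    refine le_trans (mono _ _ hAb) ?_
    rw [conj W hW, map_mul, ← Algebra.smul_def]
    exact smul_le_smul_of_nonneg_left hSs' hb0.le
  rw [algebraMap_le_iff_le_spectrum] at l1
  rw [le_algebraMap_iff_spectrum_le] at l2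
  have := hD.eigenvalues_mem_spectrum_real i
  exact ⟨l1 _ this, l2 _ this⟩

lemma sandwich_herm {S A : Matrix (Fin d) (Fin d) ℂ} (hS : S.IsHermitian) (hA : A.IsHermitian)
    (W : Matrix (Fin d) (Fin d) ℂ) : (S * (W * A * star W) * S).IsHermitian := by
  have h := Matrix.isHermitian_mul_mul_conjTranspose S
    (Matrix.isHermitian_mul_mul_conjTranspose W hA)
  rwa [hS.eq] at h

/-- the trace functional -/
noncomputable def trF (S A : Matrix (Fin d) (Fin d) ℂ) (z : ℝ) (W : Matrix (Fin d) (Fin d) ℂ) : ℝ :=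
  (mpow (S * (W * A * star W) * S) z).trace.re

lemma trF_est {S A : Matrix (Fin d) (Fin d) ℂ} (hS : S.PosDef) (hA : A.PosDef) (z : ℝ) :
    ∃ K : ℝ, ∀ W ∈ Matrix.unitaryGroup (Fin d) ℂ, ∀ W0 ∈ Matrix.unitaryGroup (Fin d) ℂ,
      |trF S A z W - trF S A z W0 -
        (cfc (fun x : ℝ => z * x ^ (z - 1)) (S * (W0 * A * star W0) * S) *
          (S * (W * A * star W) * S - S * (W0 * A * star W0) * S)).trace.re| ≤
      K * ((S * (W * A * star W) * S - S * (W0 * A * star W0) * S) *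
        (S * (W * A * star W) * S - S * (W0 * A * star W0) * S)).trace.re := by
  obtain ⟨m, M, hm, hb⟩ := eig_bounds hS hA
  obtain ⟨K, -, hK⟩ := scalar_taylor (M := M) hm z
  refine ⟨K, fun W hW W0 hW0 => ?_⟩
  have hD := sandwich_herm hS.1 hA.1 W
  have hC := sandwich_herm hS.1 hA.1 W0
  unfold trF
  rw [mpow_eq_cfc hD, mpow_eq_cfc hC]
  exact klein hC hD _ _ K fun i j => hK _ (hb W0 hW0 hC i) _ (hb W hW hD j)

lemma cont_aux0 (S A C : Matrix (Fin d) (Fin d) ℂ) :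
    Continuous fun W : Matrix (Fin d) (Fin d) ℂ => S * (W * A * star W) * S - C :=
  ((continuous_const.matrix_mul ((continuous_id.matrix_mul continuous_const).matrix_mul
    continuous_id.matrix_conjTranspose)).matrix_mul continuous_const).sub continuous_const

lemma cont_aux (S A C N : Matrix (Fin d) (Fin d) ℂ) :
    Continuous fun W : Matrix (Fin d) (Fin d) ℂ =>
      (N * (S * (W * A * star W) * S - C)).trace.re := by
  refine Complex.continuous_re.comp (Continuous.matrix_trace ?_)
  exact continuous_const.matrix_mul (cont_aux0 S A C)

lemma cont_aux2 (S A C : Matrix (Fin d) (Fin d) ℂ) (K : ℝ) :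
    Continuous fun W : Matrix (Fin d) (Fin d) ℂ =>
      K * ((S * (W * A * star W) * S - C) * (S * (W * A * star W) * S - C)).trace.re := by
  refine continuous_const.mul (Complex.continuous_re.comp (Continuous.matrix_trace ?_))
  exact (cont_aux0 S A C).matrix_mul (cont_aux0 S A C)

lemma trF_cont {S A : Matrix (Fin d) (Fin d) ℂ} (hS : S.PosDef) (hA : A.PosDef) (z : ℝ) :
    ContinuousOn (trF S A z) (Matrix.unitaryGroup (Fin d) ℂ : Set (Matrix (Fin d) (Fin d) ℂ)) := by
  obtain ⟨K, hK⟩ := trF_est hS hA z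
  intro W0 hW0
  have c1 := cont_aux S A (S * (W0 * A * star W0) * S)
    (cfc (fun x : ℝ => z * x ^ (z - 1)) (S * (W0 * A * star W0) * S))
  have c2 := cont_aux2 S A (S * (W0 * A * star W0) * S) K
  have t1 := (c1.tendsto W0).mono_left
    (nhdsWithin_le_nhds (s := (Matrix.unitaryGroup (Fin d) ℂ : Set (Matrix (Fin d) (Fin d) ℂ))))
  have t2 := (c2.tendsto W0).mono_left
    (nhdsWithin_le_nhds (s := (Matrix.unitaryGroup (Fin d) ℂ : Set (Matrix (Fin d) (Fin d) ℂ))))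
  simp only [sub_self, mul_zero, Matrix.trace_zero, Complex.zero_re] at t1 t2
  have t3 : Filter.Tendsto (fun W => trF S A z W - trF S A z W0 -
      (cfc (fun x : ℝ => z * x ^ (z - 1)) (S * (W0 * A * star W0) * S) *
        (S * (W * A * star W) * S - (S * (W0 * A * star W0) * S))).trace.re)
      (nhdsWithin W0 (Matrix.unitaryGroup (Fin d) ℂ : Set (Matrix (Fin d) (Fin d) ℂ)))
      (nhds 0) := by
    refine squeeze_zero_norm' ?_ t2
    filter_upwards [self_mem_nhdsWithin] with W hW
    exact hK W hW W0 hW0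
  have t4 := (t3.add t1).add_const (trF S A z W0)
  simp only [zero_add, sub_add_cancel] at t4
  exact t4

lemma exp_unitary {X : Matrix (Fin d) (Fin d) ℂ} (hX : star X = -X) (t : ℝ) :
    NormedSpace.exp (t • X) ∈ Matrix.unitaryGroup (Fin d) ℂ := by
  rw [Matrix.mem_unitaryGroup_iff, Matrix.star_eq_conjTranspose, ← Matrix.exp_conjTranspose,
    ← Matrix.star_eq_conjTranspose, star_smul, hX, star_trivial, smul_neg,
    ← Matrix.exp_add_of_commute _ _ (Commute.neg_right (Commute.refl (t • X))), add_neg_cancel,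
    NormedSpace.exp_zero]

/-- real part of the trace as a real linear map -/
noncomputable def trRe (d : ℕ) : Matrix (Fin d) (Fin d) ℂ →ₗ[ℝ] ℝ :=
  Complex.reLm ∘ₗ Matrix.traceLinearMap (Fin d) ℝ ℂ

open scoped Matrix.Norms.L2Operator in
lemma hasDerivAt_trRe {F : ℝ → Matrix (Fin d) (Fin d) ℂ} {F' : Matrix (Fin d) (Fin d) ℂ} {t : ℝ}
    (h : HasDerivAt F F' t) : HasDerivAt (fun t => (F t).trace.re) F'.trace.re t :=
  (LinearMap.toContinuousLinearMap (trRe d)).hasFDerivAt.comp_hasDerivAt t h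

open scoped Matrix.Norms.L2Operator in
lemma trF_deriv {S A : Matrix (Fin d) (Fin d) ℂ} (hS : S.PosDef) (hA : A.PosDef) (z : ℝ)
    {W0 : Matrix (Fin d) (Fin d) ℂ} (hW0 : W0 ∈ Matrix.unitaryGroup (Fin d) ℂ)
    {X : Matrix (Fin d) (Fin d) ℂ} (hX : star X = -X) :
    HasDerivAt (fun t : ℝ => trF S A z (NormedSpace.exp (t • X) * W0))
      (cfc (fun x : ℝ => z * x ^ (z - 1)) (S * (W0 * A * star W0) * S) *
        (S * (X * (W0 * A * star W0) - (W0 * A * star W0) * X) * S)).trace.re 0 := by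
  obtain ⟨K, hK⟩ := trF_est hS hA z
  have hE : HasDerivAt (fun t : ℝ => NormedSpace.exp (t • X)) X 0 := by
    have := hasDerivAt_exp_smul_const (𝕂 := ℝ) X (0 : ℝ)
    simpa using this
  have hV := hE.mul_const W0
  have hVs := hV.star
  have hD := ((((hV.mul_const A).mul hVs).const_mul S).mul_const S).sub_const
    (S * (W0 * A * star W0) * S)
  simp only [zero_smul, NormedSpace.exp_zero, one_mul, star_mul, hX] at hD
  have hD' : HasDerivAt (fun t : ℝ =>
      S * ((NormedSpace.exp (t • X) * W0) * A * star (NormedSpace.exp (t • X) * W0)) * S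
        - S * (W0 * A * star W0) * S)
      (S * (X * (W0 * A * star W0) - (W0 * A * star W0) * X) * S) 0 := by
    have e : S * (X * W0 * A * star W0 + W0 * A * (star W0 * -X)) * S =
        S * (X * (W0 * A * star W0) - (W0 * A * star W0) * X) * S := by
      congr 2
      simp only [mul_assoc, mul_neg, sub_eq_add_neg]
    rw [e] at hD
    simp only [star_mul]
    exact hD
  clear hD
  generalize hN : cfc (fun x : ℝ => z * x ^ (z - 1)) (S * (W0 * A * star W0) * S) = N
  have hg := hasDerivAt_trRe (hD'.const_mul N)
  have hq := hasDerivAt_trRe (hD'.mul hD')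
  have hK' : ∀ t : ℝ, _ := fun t : ℝ => hK _ (mul_mem (exp_unitary hX t) hW0) W0 hW0
  rw [hN] at hK'
  generalize S * (X * (W0 * A * star W0) - (W0 * A * star W0) * X) * S = D1 at *
  set E : ℝ → Matrix (Fin d) (Fin d) ℂ := fun t : ℝ =>
      S * ((NormedSpace.exp (t • X) * W0) * A * star (NormedSpace.exp (t • X) * W0)) * S
        - S * (W0 * A * star W0) * S with hEdef
  have hE0 : E 0 = 0 := by simp [hEdef]
  have hq' : HasDerivAt (fun t => (E t * E t).trace.re) 0 0 := by
    refine HasDerivAt.congr_deriv (f := fun t => (E t * E t).trace.re) hq ?_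
    change (D1 * E 0 + E 0 * D1).trace.re = 0
    simp [hE0]
  have hg' : HasDerivAt (fun t => (N * E t).trace.re) (N * D1).trace.re 0 := hg
  have hr : HasDerivAt (fun t : ℝ => trF S A z (NormedSpace.exp (t • X) * W0) - trF S A z W0
      - (N * E t).trace.re) 0 0 := by
    rw [hasDerivAt_iff_isLittleO] at hq' ⊢
    simp only [hE0, mul_zero, Matrix.trace_zero, Complex.zero_re, sub_zero, smul_zero, zero_smul,
      NormedSpace.exp_zero, one_mul, sub_self] at hq' ⊢
    refine Asymptotics.IsBigO.trans_isLittleO ?_ hq'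
    refine Asymptotics.IsBigO.of_bound |K| (Filter.Eventually.of_forall fun t => ?_)
    refine (hK' t).trans ?_
    rw [Real.norm_eq_abs, ← abs_mul]
    exact le_abs_self _
  have := (hr.add hg').add_const (trF S A z W0)
  rw [zero_add] at this
  refine this.congr_of_eventuallyEq (Filter.Eventually.of_forall fun t => ?_)
  simp

lemma posDef_unit {S : Matrix (Fin d) (Fin d) ℂ} (hS : S.PosDef) :
    mpow S (-1) * S = 1 ∧ S * mpow S (-1) = 1 := by
  have h1 := mpow_mul hS (-1) 1
  have h2 := mpow_mul hS 1 (-1)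
  rw [mpow_one' hS.1] at h1 h2
  rw [h1, h2]
  norm_num [mpow_zero' hS.1]

lemma sandwich_posDef {S A : Matrix (Fin d) (Fin d) ℂ} (hS : S.PosDef) (hA : A.PosDef)
    {W : Matrix (Fin d) (Fin d) ℂ} (hW : W ∈ Matrix.unitaryGroup (Fin d) ℂ) :
    (S * (W * A * star W) * S).PosDef := by
  have hW' : IsUnit W := (Unitary.isUnit_coe (U := (⟨W, hW⟩ : unitary _)))
  have h1 : (W * A * star W).PosDef :=
    (Matrix.IsUnit.posDef_star_right_conjugate_iff hW').2 hA
  have h2 := (Matrix.IsUnit.posDef_star_right_conjugate_iff hS.isUnit).2 h1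
  rwa [show star S = S from hS.1] at h2

lemma critical {S A : Matrix (Fin d) (Fin d) ℂ} (hS : S.PosDef) (hA : A.PosDef) {z : ℝ}
    (hz : 0 < z)
    {W0 : Matrix (Fin d) (Fin d) ℂ} (hW0 : W0 ∈ Matrix.unitaryGroup (Fin d) ℂ)
    (hext : IsExtrOn (trF S A z)
      (Matrix.unitaryGroup (Fin d) ℂ : Set (Matrix (Fin d) (Fin d) ℂ)) W0) :
    Commute (W0 * A * star W0) (S * S) := by
  have hCpd := sandwich_posDef hS hA hW0
  have hder := fun (X : Matrix (Fin d) (Fin d) ℂ) (hX : star X = -X) => trF_deriv hS hA z hW0 hX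
  set B := W0 * A * star W0 with hB
  have hBh : star B = B := Matrix.isHermitian_mul_mul_conjTranspose W0 hA.1
  have hSh : star S = S := hS.1
  set C := S * B * S with hC
  have hN : cfc (fun x : ℝ => z * x ^ (z - 1)) C = z • mpow C (z - 1) := by
    rw [mpow_eq_cfc hCpd.1, ← cfc_smul (R := ℝ) z _ C (aux_contOn _ _)]
    rfl
  set P := mpow C (z - 1) with hP
  have hPh : star P = P := (mpow_posDef hCpd _).1
  set M := S * P * S with hM
  have hMh : star M = M := by simp only [hM, star_mul, hPh, hSh, mul_assoc]
  set X := B * M - M * B with hXdef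
  have hX : star X = -X := by
    simp only [hXdef, star_sub, star_mul, hMh, hBh]; abel
  have hd := hder X hX
  have hloc : IsLocalExtr (fun t : ℝ => trF S A z (NormedSpace.exp (t • X) * W0)) 0 := by
    have hmem := fun t : ℝ => mul_mem (exp_unitary hX t) hW0
    rcases hext with h | h
    · left
      refine Filter.Eventually.of_forall fun t => ?_
      simpa using h (hmem t)
    · right
      refine Filter.Eventually.of_forall fun t => ?_
      simpa using h (hmem t)
  have h0 := hloc.hasDerivAt_eq_zero hd
  have h1 : (cfc (fun x : ℝ => z * x ^ (z - 1)) C * (S * (X * B - B * X) * S)).trace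
      = z • (X * X).trace := by
    rw [hN, smul_mul_assoc, Matrix.trace_smul]
    congr 1
    have e1 : (P * (S * (X * B - B * X) * S)).trace = (M * (X * B) - M * (B * X)).trace := by
      rw [← mul_assoc, Matrix.trace_mul_comm, ← mul_sub, hM]
      simp only [mul_assoc]
    rw [e1, Matrix.trace_sub]
    have e2 : (M * (X * B)).trace = (X * (B * M)).trace := by
      rw [Matrix.trace_mul_comm]; simp only [mul_assoc]
    have e3 : (M * (B * X)).trace = (X * (M * B)).trace := by
      rw [← mul_assoc, Matrix.trace_mul_comm]
    rw [e2, e3, ← Matrix.trace_sub, ← mul_sub]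
  rw [h1, Complex.real_smul, Complex.re_ofReal_mul] at h0
  have h2 : (X * X).trace.re = 0 := by
    rcases mul_eq_zero.1 h0 with h | h
    · exact absurd h hz.ne'
    · exact h
  have h3 : (Xᴴ * X).trace = 0 := by
    have h4 : Xᴴ * X = -(X * X) := by
      rw [← Matrix.star_eq_conjTranspose, hX, neg_mul]
    have h5 : 0 ≤ (Xᴴ * X).trace := (Matrix.posSemidef_conjTranspose_mul_self X).trace_nonneg
    have h6 := (Complex.le_def.1 h5).2
    apply Complex.ext
    · rw [h4, Matrix.trace_neg, Complex.neg_re, h2]; simp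
    · exact h6.symm
  have hX0 : X = 0 := Matrix.trace_conjTranspose_mul_self_eq_zero_iff.1 h3
  have hBM : B * M = M * B := sub_eq_zero.1 hX0
  -- derive commutation
  have hPC : P * C = mpow C z := by
    have := mpow_mul hCpd (z - 1) 1
    rwa [mpow_one' hCpd.1, sub_add_cancel] at this
  have hCP : C * P = mpow C z := by
    have := mpow_mul hCpd 1 (z - 1)
    rwa [mpow_one' hCpd.1, add_sub_cancel] at this
  have hcz : Commute (mpow C z) (S * S) := by
    have h7 : S * (B * M) * S = S * (M * B) * S := by rw [hBM]
    have l : S * (B * M) * S = mpow C z * (S * S) := by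
      rw [← hCP, hC, hM]; simp only [mul_assoc]
    have r : S * (M * B) * S = (S * S) * mpow C z := by
      rw [← hPC, hC, hM]; simp only [mul_assoc]
    rw [l, r] at h7
    exact h7
  have hc : Commute C (S * S) := commute_of_mpow hCpd hz.ne' hcz
  obtain ⟨u1, u2⟩ := posDef_unit hS
  have h8 : mpow S (-1) * (C * (S * S)) * mpow S (-1)
      = mpow S (-1) * ((S * S) * C) * mpow S (-1) := by rw [hc.eq]
  have l : mpow S (-1) * (C * (S * S)) * mpow S (-1) = B * (S * S) := by
    calc _ = (mpow S (-1) * S) * B * (S * S) * (S * mpow S (-1)) := by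
          rw [hC]; simp only [mul_assoc]
      _ = _ := by rw [u1, u2, one_mul, mul_one]
  have r : mpow S (-1) * ((S * S) * C) * mpow S (-1) = (S * S) * B := by
    calc _ = (mpow S (-1) * S) * (S * S) * B * (S * mpow S (-1)) := by
          rw [hC]; simp only [mul_assoc]
      _ = _ := by rw [u1, u2, one_mul, mul_one]
  rw [l, r] at h8
  exact h8

lemma compact_unitary :
    IsCompact (Matrix.unitaryGroup (Fin d) ℂ : Set (Matrix (Fin d) (Fin d) ℂ)) := by
  have hK : IsCompact (Set.univ.pi fun _ : Fin d => Set.univ.pi fun _ : Fin d =>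
      Metric.closedBall (0 : ℂ) 1) :=
    isCompact_univ_pi fun _ => isCompact_univ_pi fun _ => isCompact_closedBall _ _
  refine IsCompact.of_isClosed_subset hK ?_ ?_
  · have : (Matrix.unitaryGroup (Fin d) ℂ : Set (Matrix (Fin d) (Fin d) ℂ)) =
        {U | U * star U = 1} := by
      ext U; exact Matrix.mem_unitaryGroup_iff
    rw [this]
    exact isClosed_eq (continuous_id.matrix_mul continuous_id.matrix_conjTranspose)
      continuous_const
  · intro U hU i _ j _
    simpa using entry_norm_bound_of_unitary hU i j

lemma trF_of_commute {ρ σ : Matrix (Fin d) (Fin d) ℂ} (hρ : ρ.PosDef) (hσ : σ.PosDef)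
    {α z : ℝ} (hz : 0 < z) {W : Matrix (Fin d) (Fin d) ℂ}
    (hW : W ∈ Matrix.unitaryGroup (Fin d) ℂ)
    (hc : Commute (W * mpow ρ (α / z) * star W)
      (mpow σ ((1 - α) / (2 * z)) * mpow σ ((1 - α) / (2 * z)))) :
    trF (mpow σ ((1 - α) / (2 * z))) (mpow ρ (α / z)) z W =
      ∑ i, ∑ j, ovl (star (hσ.1.eigenvectorUnitary : Matrix (Fin d) (Fin d) ℂ) * W *
        (hρ.1.eigenvectorUnitary : Matrix (Fin d) (Fin d) ℂ)) i j *
        (hσ.1.eigenvalues i ^ (1 - α) * hρ.1.eigenvalues j ^ α) := by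
  have hW' : IsUnit W := (Unitary.isUnit_coe (U := (⟨W, hW⟩ : unitary _)))
  have hA := mpow_posDef hρ (α / z)
  have hA' : (W * mpow ρ (α / z) * star W).PosDef :=
    (Matrix.IsUnit.posDef_star_right_conjugate_iff hW').2 hA
  have hSS : mpow σ ((1 - α) / (2 * z)) * mpow σ ((1 - α) / (2 * z)) = mpow σ ((1 - α) / z) := by
    rw [mpow_mul hσ]; congr 1; field_simp; ring
  have hB := mpow_posDef hσ ((1 - α) / z)
  rw [hSS] at hc
  have hcS : Commute (mpow σ ((1 - α) / (2 * z))) (W * mpow ρ (α / z) * star W) := by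
    have := commute_mpow hB.1 hc.symm (1 / 2)
    rwa [mpow_mpow hσ, show (1 - α) / z * (1 / 2) = (1 - α) / (2 * z) by field_simp] at this
  unfold trF
  rw [hcS.eq, mul_assoc, hSS, mpow_mul_of_commute hA' hB hc, mpow_conj hA.1 hW, mpow_mpow hρ,
    mpow_mpow hσ, div_mul_cancel₀ _ hz.ne', div_mul_cancel₀ _ hz.ne', Matrix.trace_mul_comm,
    mpow_eq_cfc hρ.1, mpow_eq_cfc hσ.1, trace_cfc_mul hσ.1 hρ.1 W]

lemma perm_sum_le {w : Matrix (Fin d) (Fin d) ℝ} (hw : w ∈ doublyStochastic ℝ (Fin d))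
    (a b : Fin d → ℝ) (e1 e2 : Equiv.Perm (Fin d)) (h : Monovary (b ∘ e2) (a ∘ e1)) :
    ∑ i, ∑ j, w i j * (b i * a j) ≤ ∑ i, b (e2 i) * a (e1 i) := by
  obtain ⟨c, hc0, hc1, rfl⟩ := exists_eq_sum_perm_of_mem_doublyStochastic hw
  have e : ∑ i, ∑ j, (∑ π, c π • Equiv.Perm.permMatrix ℝ π) i j * (b i * a j)
      = ∑ π, c π * ∑ i, b i * a (π i) := by
    simp only [Matrix.sum_apply, Matrix.smul_apply, Equiv.Perm.permMatrix, PEquiv.toMatrix_apply,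
      Equiv.toPEquiv_apply, Option.mem_def, Option.some.injEq, smul_eq_mul, mul_ite, mul_one,
      mul_zero, Finset.sum_mul, Finset.mul_sum]
    rw [Finset.sum_congr rfl fun i _ => Finset.sum_comm, Finset.sum_comm]
    refine Finset.sum_congr rfl fun π _ => Finset.sum_congr rfl fun i _ => ?_
    simp
  rw [e]
  have hle : ∀ π : Equiv.Perm (Fin d), ∑ i, b i * a (π i) ≤ ∑ i, b (e2 i) * a (e1 i) := by
    intro π
    rw [← Equiv.sum_comp e2]
    have := h.sum_mul_comp_perm_le_sum_mul (σ := (e2.trans π).trans e1.symm)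
    simpa using this
  calc _ ≤ ∑ π, c π * ∑ i, b (e2 i) * a (e1 i) :=
        Finset.sum_le_sum fun π _ => mul_le_mul_of_nonneg_left (hle π) (hc0 π)
    _ = _ := by rw [← Finset.sum_mul, hc1, one_mul]

lemma le_perm_sum {w : Matrix (Fin d) (Fin d) ℝ} (hw : w ∈ doublyStochastic ℝ (Fin d))
    (a b : Fin d → ℝ) (e1 e2 : Equiv.Perm (Fin d)) (h : Antivary (b ∘ e2) (a ∘ e1)) :
    ∑ i, b (e2 i) * a (e1 i) ≤ ∑ i, ∑ j, w i j * (b i * a j) := by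
  have := perm_sum_le hw a (fun i => -b i) e1 e2 (fun i j hij => neg_le_neg (h hij))
  simp only [neg_mul, mul_neg, Finset.sum_neg_distrib, neg_le_neg_iff] at this
  exact this

lemma trF_perm {ρ σ : Matrix (Fin d) (Fin d) ℂ} (hρ : ρ.PosDef) (hσ : σ.PosDef)
    {α z : ℝ} (hz : 0 < z) (e1 e2 : Equiv.Perm (Fin d)) :
    ∃ W ∈ Matrix.unitaryGroup (Fin d) ℂ,
      trF (mpow σ ((1 - α) / (2 * z))) (mpow ρ (α / z)) z W =
        ∑ i, hσ.1.eigenvalues (e2 i) ^ (1 - α) * hρ.1.eigenvalues (e1 i) ^ α := by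
  set π : Equiv.Perm (Fin d) := e2.symm.trans e1 with hπ
  set V := (hσ.1.eigenvectorUnitary : Matrix (Fin d) (Fin d) ℂ) with hV
  set R := (hρ.1.eigenvectorUnitary : Matrix (Fin d) (Fin d) ℂ) with hR
  have hVm : V ∈ Matrix.unitaryGroup (Fin d) ℂ := hσ.1.eigenvectorUnitary.2
  have hRm : R ∈ Matrix.unitaryGroup (Fin d) ℂ := hρ.1.eigenvectorUnitary.2
  have hVV : star V * V = 1 := Matrix.mem_unitaryGroup_iff'.1 hVm
  have hRR : star R * R = 1 := Matrix.mem_unitaryGroup_iff'.1 hRm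
  set P : Matrix (Fin d) (Fin d) ℂ := fun i j => if π i = j then 1 else 0 with hP
  have hPd : ∀ f : Fin d → ℂ, P * Matrix.diagonal f * star P =
      Matrix.diagonal fun i => f (π i) := by
    intro f
    ext i j
    rw [Matrix.mul_apply]
    have hPa : ∀ i j, P i j = if π i = j then 1 else 0 := fun _ _ => rfl
    simp only [Matrix.mul_diagonal, Matrix.star_apply, hPa, Matrix.diagonal_apply]
    rw [Finset.sum_eq_single (π i)]
    · by_cases hij : i = j
      · subst hij
        simp
      · have h' : ¬ π j = π i := fun h => hij (π.injective h).symm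
        simp [hij, h']
    · intro x _ hx
      have : ¬ π i = x := fun h => hx h.symm
      simp [this]
    · simp
  have hPm : P ∈ Matrix.unitaryGroup (Fin d) ℂ := by
    rw [Matrix.mem_unitaryGroup_iff]
    have := hPd (fun _ => 1)
    simpa using this
  have hWm : V * P * star R ∈ Matrix.unitaryGroup (Fin d) ℂ :=
    mul_mem (mul_mem hVm hPm) (Unitary.star_mem hRm)
  refine ⟨V * P * star R, hWm, ?_⟩
  rw [trF_of_commute hρ hσ hz hWm]
  · have hQ : star V * (V * P * star R) * R = P := by
      calc _ = (star V * V) * P * (star R * R) := by simp only [mul_assoc]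
        _ = P := by rw [hVV, hRR, one_mul, mul_one]
    rw [hQ, ← Equiv.sum_comp e2]
    refine Finset.sum_congr rfl fun i _ => ?_
    rw [Finset.sum_eq_single (e1 i)]
    · simp [ovl, hP, hπ]
    · intro j _ hj
      have : ¬ (e1 i = j) := fun h => hj h.symm
      simp [ovl, hP, hπ, this]
    · simp
  · have h1 : V * P * star R * mpow ρ (α / z) * star (V * P * star R) =
        V * Matrix.diagonal (fun i => ((hρ.1.eigenvalues (π i) ^ (α / z) : ℝ) : ℂ)) * star V := by
      rw [mpow, dif_pos hρ.1, ← hPd (fun i => ((hρ.1.eigenvalues i ^ (α / z) : ℝ) : ℂ)), ← hR]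
      generalize Matrix.diagonal (fun i => ((hρ.1.eigenvalues i ^ (α / z) : ℝ) : ℂ)) = D
      calc _ = V * P * (star R * R) * D * (star R * R) * star P * star V := by
            simp only [star_mul, star_star, mul_assoc]
        _ = _ := by rw [hRR]; simp only [mul_one, mul_assoc]
    rw [h1, mpow_mul hσ, mpow, dif_pos hσ.1, ← hV]
    have h2 : ∀ D1 D2 : Matrix (Fin d) (Fin d) ℂ, (V * D1 * star V) * (V * D2 * star V) =
        V * (D1 * D2) * star V := by
      intro D1 D2
      calc _ = V * D1 * (star V * V) * D2 * star V := by simp only [mul_assoc]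
        _ = _ := by rw [hVV]; simp only [mul_one, mul_assoc]
    rw [commute_iff_eq, h2, h2, Matrix.diagonal_mul_diagonal, Matrix.diagonal_mul_diagonal]
    congr 2
    congr 1
    funext i
    exact mul_comm _ _

lemma trF_bounds {ρ σ : Matrix (Fin d) (Fin d) ℂ} (hρ : ρ.PosDef) (hσ : σ.PosDef)
    {α z : ℝ} (hz : 0 < z) (e1 e2 : Equiv.Perm (Fin d)) :
    (Monovary ((fun i => hσ.1.eigenvalues i ^ (1 - α)) ∘ e2)
        ((fun i => hρ.1.eigenvalues i ^ α) ∘ e1) →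
      ∀ W ∈ Matrix.unitaryGroup (Fin d) ℂ,
        trF (mpow σ ((1 - α) / (2 * z))) (mpow ρ (α / z)) z W ≤
        ∑ i, hσ.1.eigenvalues (e2 i) ^ (1 - α) * hρ.1.eigenvalues (e1 i) ^ α) ∧
    (Antivary ((fun i => hσ.1.eigenvalues i ^ (1 - α)) ∘ e2)
        ((fun i => hρ.1.eigenvalues i ^ α) ∘ e1) →
      ∀ W ∈ Matrix.unitaryGroup (Fin d) ℂ,
        ∑ i, hσ.1.eigenvalues (e2 i) ^ (1 - α) * hρ.1.eigenvalues (e1 i) ^ α ≤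
        trF (mpow σ ((1 - α) / (2 * z))) (mpow ρ (α / z)) z W) := by
  have hS := mpow_posDef hσ ((1 - α) / (2 * z))
  have hA := mpow_posDef hρ (α / z)
  have hcont := trF_cont hS hA z
  have hne : (Matrix.unitaryGroup (Fin d) ℂ : Set (Matrix (Fin d) (Fin d) ℂ)).Nonempty :=
    ⟨1, one_mem _⟩
  have hds : ∀ W ∈ Matrix.unitaryGroup (Fin d) ℂ,
      ovl (star (hσ.1.eigenvectorUnitary : Matrix (Fin d) (Fin d) ℂ) * W *
        (hρ.1.eigenvectorUnitary : Matrix (Fin d) (Fin d) ℂ)) ∈ doublyStochastic ℝ (Fin d) :=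
    fun W hW => ovl_ds (mul_mem (mul_mem (Unitary.star_mem hσ.1.eigenvectorUnitary.2) hW)
      hρ.1.eigenvectorUnitary.2)
  constructor
  · intro hmono W hW
    obtain ⟨W0, hW0, hmax⟩ := compact_unitary.exists_isMaxOn hne hcont
    refine (hmax hW).trans ?_
    change trF _ _ z W0 ≤ _
    rw [trF_of_commute hρ hσ hz hW0 (critical hS hA hz hW0 hmax.isExtr)]
    exact perm_sum_le (hds W0 hW0) (fun i => hρ.1.eigenvalues i ^ α)
      (fun i => hσ.1.eigenvalues i ^ (1 - α)) e1 e2 hmono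
  · intro hmono W hW
    obtain ⟨W0, hW0, hmin⟩ := compact_unitary.exists_isMinOn hne hcont
    refine le_trans ?_ (hmin hW)
    change _ ≤ trF _ _ z W0
    rw [trF_of_commute hρ hσ hz hW0 (critical hS hA hz hW0 hmin.isExtr)]
    exact le_perm_sum (hds W0 hW0) (fun i => hρ.1.eigenvalues i ^ α)
      (fun i => hσ.1.eigenvalues i ^ (1 - α)) e1 e2 hmono

lemma Saz_eq {ρ σ : Matrix (Fin d) (Fin d) ℂ} (hρ : ρ.PosDef) (hσ : σ.PosDef) (hd : 0 < d)
    (α z : ℝ) {U : Matrix (Fin d) (Fin d) ℂ} (hU : U ∈ Matrix.unitaryGroup (Fin d) ℂ) :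
    0 < trF (mpow σ ((1 - α) / (2 * z))) (mpow ρ (α / z)) z (star U) ∧
    Saz ρ (U * σ * star U) α z = α / (α - 1) * (1 / α *
      Real.log (trF (mpow σ ((1 - α) / (2 * z))) (mpow ρ (α / z)) z (star U))) := by
  have hS := mpow_posDef hσ ((1 - α) / (2 * z))
  have hA := mpow_posDef hρ (α / z)
  have hU' := Unitary.star_mem hU
  have hpd := sandwich_posDef hS hA hU'
  have hpos : 0 < trF (mpow σ ((1 - α) / (2 * z))) (mpow ρ (α / z)) z (star U) := by
    unfold trF
    rw [mpow_eq_cfc hpd.1, trace_cfc hpd.1]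
    have : Nonempty (Fin d) := ⟨⟨0, hd⟩⟩
    exact Finset.sum_pos (fun i _ => Real.rpow_pos_of_pos (hpd.eigenvalues_pos i) _)
      Finset.univ_nonempty
  refine ⟨hpos, ?_⟩
  unfold Saz Faz
  have e : (mpow (mpow (U * σ * star U) ((1 - α) / (2 * z)) * mpow ρ (α / z) *
      mpow (U * σ * star U) ((1 - α) / (2 * z))) z).trace.re =
      trF (mpow σ ((1 - α) / (2 * z))) (mpow ρ (α / z)) z (star U) := by
    rw [mpow_conj hσ.1 hU]
    unfold trF
    have e1 : U * mpow σ ((1 - α) / (2 * z)) * star U * mpow ρ (α / z) *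
        (U * mpow σ ((1 - α) / (2 * z)) * star U) =
        U * (mpow σ ((1 - α) / (2 * z)) * (star U * mpow ρ (α / z) * star (star U)) *
          mpow σ ((1 - α) / (2 * z))) * star U := by
      simp only [star_star, mul_assoc]
    rw [e1, mpow_conj hpd.1 hU, Matrix.trace_mul_comm, ← mul_assoc,
      Matrix.mem_unitaryGroup_iff'.1 hU, one_mul]
  rw [e, Real.log_rpow hpos]

end helpers

/-- for positive definite density matrices `ρ, σ` and `(α,z)` with either
`α, z ∈ (0,1)` or `α ∈ (1,∞), z ∈ (0,∞)`, the maximum of `S_{α,z}(ρ‖UσU*)` over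
unitaries `U` equals `S_α^C(λ↓(ρ)‖λ↑(σ))`. -/
theorem stmt_7 {d : ℕ} (ρ σ : Matrix (Fin d) (Fin d) ℂ)
    (hρ : ρ.PosDef) (hσ : σ.PosDef) (hρ1 : ρ.trace = 1) (hσ1 : σ.trace = 1)
    (α z : ℝ)
    (hαz : (α ∈ Set.Ioo (0 : ℝ) 1 ∧ z ∈ Set.Ioo (0 : ℝ) 1) ∨ (1 < α ∧ 0 < z)) :
    IsGreatest {x : ℝ | ∃ U ∈ Matrix.unitaryGroup (Fin d) ℂ,
        x = Saz ρ (U * σ * star U) α z}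
      (SazC (eigDown hρ.1) (eigUp hσ.1) α) := by
  have hd : 0 < d := by
    rcases Nat.eq_zero_or_pos d with h | h
    · subst h
      simp [Matrix.trace] at hρ1
    · exact h
  have hz : 0 < z := by rcases hαz with h | h; exacts [h.2.1, h.2]
  have hα : 0 < α := by rcases hαz with h | h; exacts [h.1.1, one_pos.trans h.1]
  set p := hρ.1.eigenvalues with hp
  set q := hσ.1.eigenvalues with hq
  set e1 : Equiv.Perm (Fin d) := Fin.revPerm.trans (Tuple.sort p) with he1
  set e2 : Equiv.Perm (Fin d) := Tuple.sort q with he2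
  have hp0 : ∀ i, 0 < p i := hρ.eigenvalues_pos
  have hq0 : ∀ i, 0 < q i := hσ.eigenvalues_pos
  have hpa : Antitone ((fun i => p i ^ α) ∘ e1) := by
    intro i j hij
    refine Real.rpow_le_rpow (hp0 _).le ?_ hα.le
    exact Tuple.monotone_sort p (Fin.rev_le_rev.2 hij)
  have hqm : Monotone (q ∘ e2) := Tuple.monotone_sort q
  have : Nonempty (Fin d) := ⟨⟨0, hd⟩⟩
  have hTpos : 0 < ∑ i, q (e2 i) ^ (1 - α) * p (e1 i) ^ α :=
    Finset.sum_pos (fun i _ => mul_pos (Real.rpow_pos_of_pos (hq0 _) _)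
      (Real.rpow_pos_of_pos (hp0 _) _)) Finset.univ_nonempty
  have hC : SazC (eigDown hρ.1) (eigUp hσ.1) α =
      α / (α - 1) * (1 / α * Real.log (∑ i, q (e2 i) ^ (1 - α) * p (e1 i) ^ α)) := by
    have : ∑ i, eigDown hρ.1 i ^ α * eigUp hσ.1 i ^ (1 - α) =
        ∑ i, q (e2 i) ^ (1 - α) * p (e1 i) ^ α :=
      Finset.sum_congr rfl fun i _ => mul_comm _ _
    rw [SazC, FazC, this, Real.log_rpow hTpos]
  rw [hC]
  obtain ⟨hb1, hb2⟩ := trF_bounds hρ hσ (α := α) hz e1 e2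
  constructor
  · obtain ⟨W, hW, hWe⟩ := trF_perm hρ hσ (α := α) hz e1 e2
    refine ⟨star W, Unitary.star_mem hW, ?_⟩
    rw [(Saz_eq hρ hσ hd α z (Unitary.star_mem hW)).2, star_star, hWe]
  · rintro x ⟨U, hU, rfl⟩
    obtain ⟨hpos, hS⟩ := Saz_eq hρ hσ hd α z hU
    rw [hS]
    rcases hαz with h | h
    · have hqa : Monotone ((fun i => q i ^ (1 - α)) ∘ e2) := fun i j hij =>
        Real.rpow_le_rpow (hq0 _).le (hqm hij) (by linarith [h.1.2])
      have hle := hb2 (hqa.antivary hpa) _ (Unitary.star_mem hU)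
      refine mul_le_mul_of_nonpos_left ?_ (div_nonpos_of_nonneg_of_nonpos hα.le
        (by linarith [h.1.2]))
      exact mul_le_mul_of_nonneg_left (Real.log_le_log hTpos hle) (by positivity)
    · have hqa : Antitone ((fun i => q i ^ (1 - α)) ∘ e2) := fun i j hij =>
        Real.rpow_le_rpow_of_nonpos (hq0 _) (hqm hij) (by linarith [h.1])
      have hle := hb1 (hqa.monovary hpa) _ (Unitary.star_mem hU)
      refine mul_le_mul_of_nonneg_left ?_ (div_nonneg hα.le (by linarith [h.1]))
      exact mul_le_mul_of_nonneg_left (Real.log_le_log hpos hle) (by positivity)
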